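/- Let Ω be an open subset of ℝⁿ and let f = (u₁, v₁) and g = (u₂, v₂) be H-continuous pairs on Ω. Let m(x) = min{u₁(x)u₂(x), u₁(x)v₂(x), v₁(x)u₂(x), v₁(x)v₂(x)} and M(x) = max of the same four numbers. Then both pairs F(I(S(M))) = (I(I(S(M))), S(I(S(M)))) and F(S(I(m))) = (I(S(I(m))), S(S(I(m)))) are H-continuous, both satisfy the inclusion m(x) ≤ (lower component)(x) ≤ (upper component)(x) ≤ M(x) for all x ∈ Ω, and consequently both are equal to f ⊗ g, the unique H-continuous pair contained in the pointwise interval product f × g. -/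

import Mathlib

open Set

/-- Points of `ℝⁿ`. -/
abbrev Pt (n : ℕ) := EuclideanSpace ℝ (Fin n)

/-- Lower Baire operator `I(D,Ω,f)(x) = sup_{δ>0} inf { f y : y ∈ B_δ(x) ∩ D }`,
where `B_δ(x) = { y ∈ Ω : ‖y - x‖ < δ }`. -/
noncomputable def Ilow {n : ℕ} (D Om : Set (Pt n)) (f : Pt n → ℝ) (x : Pt n) : ℝ :=
  sSup {a : ℝ | ∃ δ : ℝ, 0 < δ ∧
    a = sInf (f '' {y | y ∈ Om ∧ ‖y - x‖ < δ ∧ y ∈ D})}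

/-- Upper Baire operator `S(D,Ω,f)(x) = inf_{δ>0} sup { f y : y ∈ B_δ(x) ∩ D }`. -/
noncomputable def Shigh {n : ℕ} (D Om : Set (Pt n)) (f : Pt n → ℝ) (x : Pt n) : ℝ :=
  sInf {a : ℝ | ∃ δ : ℝ, 0 < δ ∧
    a = sSup (f '' {y | y ∈ Om ∧ ‖y - x‖ < δ ∧ y ∈ D})}

/-- `f`, defined on `D ⊆ Ω`, is locally bounded relative to `Ω`. -/
def LocBddOn {n : ℕ} (Om D : Set (Pt n)) (f : Pt n → ℝ) : Prop :=
  ∀ x ∈ Om, ∃ δ : ℝ, 0 < δ ∧ ∃ M : ℝ,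
    ∀ y, y ∈ Om → ‖y - x‖ < δ → y ∈ D → |f y| < M

/-- `(u, v)` encodes an interval-valued function `x ↦ [u x, v x]` on `Om`. -/
def IntervalPair {n : ℕ} (Om : Set (Pt n)) (u v : Pt n → ℝ) : Prop :=
  LocBddOn Om Om u ∧ LocBddOn Om Om v ∧ ∀ x ∈ Om, u x ≤ v x

/-- The pair `(u, v)` is S-continuous on `Om`: `I(u) = u` and `S(v) = v`. -/
def SCont {n : ℕ} (Om : Set (Pt n)) (u v : Pt n → ℝ) : Prop :=
  ∀ x ∈ Om, Ilow Om Om u x = u x ∧ Shigh Om Om v x = v x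

/-- The pair `(u, v)` is Hausdorff continuous on `Om`. -/
def HCont {n : ℕ} (Om : Set (Pt n)) (u v : Pt n → ℝ) : Prop :=
  ∀ p q : Pt n → ℝ, LocBddOn Om Om p → LocBddOn Om Om q →
    (∀ x ∈ Om, u x ≤ p x ∧ p x ≤ q x ∧ q x ≤ v x) →
    ∀ x ∈ Om, Ilow Om Om p x = u x ∧ Shigh Om Om q x = v x

/-- `(u, v)` is an H-continuous interval pair on `Om`. -/
def HContPair {n : ℕ} (Om : Set (Pt n)) (u v : Pt n → ℝ) : Prop :=
  IntervalPair Om u v ∧ HCont Om u v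

/-- Lower endpoint of the pointwise interval product. -/
noncomputable def imin {n : ℕ} (u₁ v₁ u₂ v₂ : Pt n → ℝ) (x : Pt n) : ℝ :=
  min (min (u₁ x * u₂ x) (u₁ x * v₂ x)) (min (v₁ x * u₂ x) (v₁ x * v₂ x))

/-- Upper endpoint of the pointwise interval product. -/
noncomputable def imax {n : ℕ} (u₁ v₁ u₂ v₂ : Pt n → ℝ) (x : Pt n) : ℝ :=
  max (max (u₁ x * u₂ x) (u₁ x * v₂ x)) (max (v₁ x * u₂ x) (v₁ x * v₂ x))

/-- `(pl, pu)` is the H-continuous pair contained pointwise in the interval sum of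
`(u₁, v₁)` and `(u₂, v₂)`, i.e. `(pl, pu) = (u₁,v₁) ⊕ (u₂,v₂)`. -/
def IsOplus {n : ℕ} (Om : Set (Pt n)) (u₁ v₁ u₂ v₂ pl pu : Pt n → ℝ) : Prop :=
  HContPair Om pl pu ∧
    ∀ x ∈ Om, u₁ x + u₂ x ≤ pl x ∧ pl x ≤ pu x ∧ pu x ≤ v₁ x + v₂ x

/-- `(ql, qu)` is the H-continuous pair contained pointwise in the interval product of
`(u₁, v₁)` and `(u₂, v₂)`, i.e. `(ql, qu) = (u₁,v₁) ⊗ (u₂,v₂)`. -/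
def IsOtimes {n : ℕ} (Om : Set (Pt n)) (u₁ v₁ u₂ v₂ ql qu : Pt n → ℝ) : Prop :=
  HContPair Om ql qu ∧
    ∀ x ∈ Om, imin u₁ v₁ u₂ v₂ x ≤ ql x ∧ ql x ≤ qu x ∧ qu x ≤ imax u₁ v₁ u₂ v₂ x

/-!
Write `m` and `M` for the endpoints of the pointwise product, `I` and `S` for the Baire operators.
`I` sends `f` to its largest lower semicontinuous minorant and `S` to its smallest upper
semicontinuous majorant, so `I ∘ S` and `S ∘ I` are idempotent, which makes `F(I(S(M)))` and
`F(S(I(m)))` H-continuous. Since `m` is lower and `M` upper semicontinuous, both pairs stay between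
`m` and `M`.

For uniqueness, the widths of both H-continuous factors are simultaneously arbitrarily small at
points arbitrarily close to any given point, hence so is `M - m`, which gives `I(M) ≤ S(m)`. An
H-continuous pair `(p, q)` between `m` and `M` satisfies `p ≤ I(M)` and `S(m) ≤ q`; applying `I` and
`S` to the chain `p ≤ I(M) ≤ S(m) ≤ q` forces `p = I(M)` and `q = S(m)`.
-/

section BoundedOnBounded

variable {X : Type*} [Bornology X] {s : Set X} {f g : X → ℝ}

/-- `f` is bounded below on every bounded subset of `s`. Local boundedness is too weak a
hypothesis for `Ilow`: that operator takes infima over balls of all radii, and the real `sInf` of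
a set unbounded below is `0`, not `-∞`. -/
def BddBelowOnBounded (s : Set X) (f : X → ℝ) : Prop :=
  ∀ t ⊆ s, Bornology.IsBounded t → BddBelow (f '' t)

/-- `f` is bounded above on every bounded subset of `s`, which keeps the suprema in `Shigh`
meaningful. -/
def BddAboveOnBounded (s : Set X) (f : X → ℝ) : Prop :=
  ∀ t ⊆ s, Bornology.IsBounded t → BddAbove (f '' t)

lemma bddBelowOnBounded_neg : BddBelowOnBounded s (-f) ↔ BddAboveOnBounded s f := by
  simp only [BddBelowOnBounded, BddAboveOnBounded, ← bddBelow_neg, ← image_neg_eq_neg,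
    image_image, Pi.neg_apply]

lemma bddAboveOnBounded_neg : BddAboveOnBounded s (-f) ↔ BddBelowOnBounded s f := by
  rw [← bddBelowOnBounded_neg, neg_neg]

lemma BddBelowOnBounded.mono (hf : BddBelowOnBounded s f) (hfg : ∀ x ∈ s, f x ≤ g x) :
    BddBelowOnBounded s g := by
  intro t hts ht
  obtain ⟨a, ha⟩ := hf t hts ht
  exact ⟨a, forall_mem_image.2 fun x hx => (ha (mem_image_of_mem f hx)).trans (hfg x (hts hx))⟩

lemma BddAboveOnBounded.mono (hg : BddAboveOnBounded s g) (hfg : ∀ x ∈ s, f x ≤ g x) :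
    BddAboveOnBounded s f :=
  bddBelowOnBounded_neg.1 <|
    (bddBelowOnBounded_neg.2 hg).mono fun x hx => neg_le_neg (hfg x hx)

end BoundedOnBounded

section BaireOperators

open Filter Topology Metric

variable {n : ℕ} {Om : Set (Pt n)} {f g : Pt n → ℝ} {x : Pt n} {a : ℝ}

lemma Ilow_eq_iSup (Om : Set (Pt n)) (f : Pt n → ℝ) (x : Pt n) :
    Ilow Om Om f x = ⨆ δ : Ioi (0 : ℝ), sInf (f '' (ball x δ ∩ Om)) := by
  have hball (δ : ℝ) : {y | y ∈ Om ∧ ‖y - x‖ < δ ∧ y ∈ Om} = ball x δ ∩ Om := by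
    ext y
    simp only [mem_ofPred_eq, mem_inter_iff, mem_ball_iff_norm]
    tauto
  simp only [Ilow, hball, iSup, range, Subtype.exists, mem_Ioi, exists_prop, eq_comm]

lemma Shigh_eq_neg_Ilow_neg (f : Pt n → ℝ) : Shigh Om Om f = -Ilow Om Om (-f) := by
  funext x
  have hneg (t : Set (Pt n)) : sInf ((-f) '' t) = -sSup (f '' t) := by
    rw [← Real.sInf_neg, ← image_neg_eq_neg, image_image]
    rfl
  rw [Pi.neg_apply, Ilow, ← Real.sInf_neg, Shigh]
  congr 1
  ext b
  simp only [Set.mem_neg, mem_ofPred_eq, hneg, neg_inj]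

lemma neg_Shigh (f : Pt n → ℝ) : -Shigh Om Om f = Ilow Om Om (-f) := by
  rw [Shigh_eq_neg_Ilow_neg, neg_neg]

lemma bddAbove_range_sInf_image_ball (f : Pt n → ℝ) (hx : x ∈ Om) :
    BddAbove (range fun δ : Ioi (0 : ℝ) => sInf (f '' (ball x δ ∩ Om))) := by
  refine ⟨max (f x) 0, forall_mem_range.2 fun ⟨δ, hδ⟩ => ?_⟩
  by_cases hb : BddBelow (f '' (ball x δ ∩ Om))
  · exact (csInf_le hb (mem_image_of_mem f ⟨mem_ball_self hδ, hx⟩)).trans (le_max_left _ _)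
  · exact (Real.sInf_of_not_bddBelow hb).trans_le (le_max_right _ _)

lemma le_Ilow (hx : x ∈ Om) (h : ∀ᶠ y in 𝓝[Om] x, a ≤ f y) : a ≤ Ilow Om Om f x := by
  obtain ⟨δ, hδ, hball⟩ := nhdsWithin_basis_ball.eventually_iff.1 h
  rw [Ilow_eq_iSup]
  refine le_ciSup_of_le (bddAbove_range_sInf_image_ball f hx) ⟨δ, hδ⟩ ?_
  exact le_csInf ⟨f x, mem_image_of_mem f ⟨mem_ball_self hδ, hx⟩⟩ (forall_mem_image.2 hball)

lemma Shigh_le (hx : x ∈ Om) (h : ∀ᶠ y in 𝓝[Om] x, f y ≤ a) : Shigh Om Om f x ≤ a := by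
  rw [Shigh_eq_neg_Ilow_neg]
  exact neg_le_of_neg_le (le_Ilow hx (h.mono fun y hy => neg_le_neg hy))

lemma eventually_lt_of_lt_Ilow (hf : BddBelowOnBounded Om f) (h : a < Ilow Om Om f x) :
    ∀ᶠ y in 𝓝[Om] x, a < f y := by
  rw [Ilow_eq_iSup] at h
  obtain ⟨⟨δ, hδ⟩, hlt⟩ := exists_lt_of_lt_ciSup h
  refine nhdsWithin_basis_ball.eventually_iff.2 ⟨δ, hδ, fun y hy => hlt.trans_le ?_⟩
  exact csInf_le (hf _ inter_subset_right (isBounded_ball.subset inter_subset_left))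
    (mem_image_of_mem f hy)

lemma eventually_lt_of_Shigh_lt (hf : BddAboveOnBounded Om f) (h : Shigh Om Om f x < a) :
    ∀ᶠ y in 𝓝[Om] x, f y < a := by
  rw [Shigh_eq_neg_Ilow_neg] at h
  exact (eventually_lt_of_lt_Ilow (bddBelowOnBounded_neg.2 hf) (neg_lt_of_neg_lt h)).mono
    fun y hy => neg_lt_neg_iff.1 hy

lemma Ilow_le (hf : BddBelowOnBounded Om f) (hx : x ∈ Om) : Ilow Om Om f x ≤ f x :=
  le_of_forall_lt fun _ ha => (eventually_lt_of_lt_Ilow hf ha).self_of_nhdsWithin hx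

lemma le_Shigh (hf : BddAboveOnBounded Om f) (hx : x ∈ Om) : f x ≤ Shigh Om Om f x :=
  le_of_forall_gt fun _ ha => (eventually_lt_of_Shigh_lt hf ha).self_of_nhdsWithin hx

lemma lowerSemicontinuousOn_Ilow (hf : BddBelowOnBounded Om f) :
    LowerSemicontinuousOn (Ilow Om Om f) Om := by
  intro x _ a ha
  obtain ⟨b, hab, hb⟩ := exists_between ha
  filter_upwards [eventually_eventually_nhdsWithin.2 (eventually_lt_of_lt_Ilow hf hb),
    self_mem_nhdsWithin] with y hby hy
  exact hab.trans_le (le_Ilow hy (hby.mono fun _ => le_of_lt))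

lemma upperSemicontinuousOn_Shigh (hf : BddAboveOnBounded Om f) :
    UpperSemicontinuousOn (Shigh Om Om f) Om := by
  rw [← lowerSemicontinuousOn_neg_iff, neg_Shigh]
  exact lowerSemicontinuousOn_Ilow (bddBelowOnBounded_neg.2 hf)

lemma le_Ilow_of_lowerSemicontinuousOn (hg : LowerSemicontinuousOn g Om)
    (hgf : ∀ y ∈ Om, g y ≤ f y) (hx : x ∈ Om) : g x ≤ Ilow Om Om f x := by
  refine le_of_forall_lt_imp_le_of_dense fun a ha => le_Ilow hx ?_
  filter_upwards [hg x hx a ha, self_mem_nhdsWithin] with y hay hy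
  exact hay.le.trans (hgf y hy)

lemma Shigh_le_of_upperSemicontinuousOn (hg : UpperSemicontinuousOn g Om)
    (hfg : ∀ y ∈ Om, f y ≤ g y) (hx : x ∈ Om) : Shigh Om Om f x ≤ g x := by
  refine le_of_forall_gt_imp_ge_of_dense fun a ha => Shigh_le hx ?_
  filter_upwards [hg x hx a ha, self_mem_nhdsWithin] with y hay hy
  exact (hfg y hy).trans hay.le

lemma Ilow_mono (hf : BddBelowOnBounded Om f) (hfg : ∀ y ∈ Om, f y ≤ g y) (hx : x ∈ Om) :
    Ilow Om Om f x ≤ Ilow Om Om g x :=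
  le_Ilow_of_lowerSemicontinuousOn (lowerSemicontinuousOn_Ilow hf)
    (fun y hy => (Ilow_le hf hy).trans (hfg y hy)) hx

lemma Shigh_mono (hg : BddAboveOnBounded Om g) (hfg : ∀ y ∈ Om, f y ≤ g y) (hx : x ∈ Om) :
    Shigh Om Om f x ≤ Shigh Om Om g x :=
  Shigh_le_of_upperSemicontinuousOn (upperSemicontinuousOn_Shigh hg)
    (fun y hy => (hfg y hy).trans (le_Shigh hg hy)) hx

lemma BddBelowOnBounded.Ilow (hf : BddBelowOnBounded Om f) :
    BddBelowOnBounded Om (Ilow Om Om f) := by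
  intro t hts ht
  obtain ⟨a, ha⟩ := hf (cthickening 1 t ∩ Om) inter_subset_right
    (ht.cthickening.subset inter_subset_left)
  refine ⟨a, forall_mem_image.2 fun x hx => le_Ilow (hts hx) ?_⟩
  refine nhdsWithin_basis_ball.eventually_iff.2 ⟨1, one_pos, fun y hy => ha ?_⟩
  exact mem_image_of_mem f ⟨mem_cthickening_of_dist_le y x 1 t hx (mem_ball.1 hy.1).le, hy.2⟩

lemma BddAboveOnBounded.Shigh (hf : BddAboveOnBounded Om f) :
    BddAboveOnBounded Om (Shigh Om Om f) := by
  rw [← bddBelowOnBounded_neg, neg_Shigh]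
  exact (bddBelowOnBounded_neg.2 hf).Ilow

lemma Ilow_Ilow (hf : BddBelowOnBounded Om f) (hx : x ∈ Om) :
    Ilow Om Om (Ilow Om Om f) x = Ilow Om Om f x :=
  (Ilow_le hf.Ilow hx).antisymm <|
    le_Ilow_of_lowerSemicontinuousOn (lowerSemicontinuousOn_Ilow hf) (fun _ _ => le_rfl) hx

lemma Shigh_Shigh (hf : BddAboveOnBounded Om f) (hx : x ∈ Om) :
    Shigh Om Om (Shigh Om Om f) x = Shigh Om Om f x :=
  (Shigh_le_of_upperSemicontinuousOn (upperSemicontinuousOn_Shigh hf)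
    (fun _ _ => le_rfl) hx).antisymm (le_Shigh hf.Shigh hx)

/- If `f` were unbounded below on a bounded set, then at a point where `f < 0` the infima over
large balls would take the junk value `0`, making `Ilow` nonnegative there. -/
lemma bddBelowOnBounded_of_Ilow_eq (h : ∀ x ∈ Om, Ilow Om Om f x = f x) :
    BddBelowOnBounded Om f := by
  intro t hts ht
  by_contra hunbdd
  obtain ⟨_, ⟨y, hyt, rfl⟩, hneg⟩ := not_bddBelow_iff.1 hunbdd 0
  obtain ⟨δ, hδ, htδ⟩ := ht.subset_ball_lt 0 y
  have hball : ¬BddBelow (f '' (ball y δ ∩ Om)) := fun hb =>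
    hunbdd (hb.mono (image_mono (subset_inter htδ hts)))
  have hnonneg : 0 ≤ Ilow Om Om f y := by
    rw [Ilow_eq_iSup]
    exact le_ciSup_of_le (bddAbove_range_sInf_image_ball f (hts hyt)) ⟨δ, hδ⟩
      (Real.sInf_of_not_bddBelow hball).ge
  exact (h y (hts hyt) ▸ hnonneg).not_gt hneg

lemma bddAboveOnBounded_of_Shigh_eq (h : ∀ x ∈ Om, Shigh Om Om f x = f x) :
    BddAboveOnBounded Om f := by
  refine bddBelowOnBounded_neg.1 (bddBelowOnBounded_of_Ilow_eq fun x hx => ?_)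
  rw [← neg_Shigh, Pi.neg_apply, h x hx, Pi.neg_apply]

lemma locBddOn_of_bddBelowOnBounded_of_bddAboveOnBounded (hl : BddBelowOnBounded Om f)
    (hu : BddAboveOnBounded Om f) : LocBddOn Om Om f := by
  intro x _
  have hbdd : Bornology.IsBounded (ball x 1 ∩ Om) := isBounded_ball.subset inter_subset_left
  obtain ⟨a, ha⟩ := hl _ inter_subset_right hbdd
  obtain ⟨b, hb⟩ := hu _ inter_subset_right hbdd
  refine ⟨1, one_pos, max |a| |b| + 1, fun y hy hyx _ => ?_⟩
  have hfy : f y ∈ f '' (ball x 1 ∩ Om) := mem_image_of_mem f ⟨mem_ball_iff_norm.2 hyx, hy⟩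
  exact (abs_le_max_abs_abs (ha hfy) (hb hfy)).trans_lt (lt_add_one _)

lemma LocBddOn.eventually_abs_le (hf : LocBddOn Om Om f) (hx : x ∈ Om) :
    ∀ᶠ C in atTop, ∀ᶠ y in 𝓝[Om] x, |f y| ≤ C := by
  obtain ⟨δ, hδ, M, hM⟩ := hf x hx
  filter_upwards [eventually_ge_atTop M] with C hC
  refine nhdsWithin_basis_ball.eventually_iff.2 ⟨δ, hδ, fun y hy => ?_⟩
  exact (hM y hy.2 (mem_ball_iff_norm.1 hy.1) hy.2).le.trans hC

end BaireOperators

section HausdorffContinuity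

open Filter Topology

variable {n : ℕ} {Om : Set (Pt n)} {f m M p q u v : Pt n → ℝ} {x : Pt n} {ε : ℝ}

namespace HContPair

lemma Ilow_lower (h : HContPair Om u v) (hx : x ∈ Om) : Ilow Om Om u x = u x :=
  (h.2 u v h.1.1 h.1.2.1 (fun y hy => ⟨le_rfl, h.1.2.2 y hy, le_rfl⟩) x hx).1

lemma Shigh_upper (h : HContPair Om u v) (hx : x ∈ Om) : Shigh Om Om v x = v x :=
  (h.2 u v h.1.1 h.1.2.1 (fun y hy => ⟨le_rfl, h.1.2.2 y hy, le_rfl⟩) x hx).2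

lemma Shigh_lower (h : HContPair Om u v) (hx : x ∈ Om) : Shigh Om Om u x = v x :=
  (h.2 u u h.1.1 h.1.1 (fun y hy => ⟨le_rfl, le_rfl, h.1.2.2 y hy⟩) x hx).2

lemma Ilow_upper (h : HContPair Om u v) (hx : x ∈ Om) : Ilow Om Om v x = u x :=
  (h.2 v v h.1.2.1 h.1.2.1 (fun y hy => ⟨h.1.2.2 y hy, le_rfl, le_rfl⟩) x hx).1

lemma bddBelowOnBounded_lower (h : HContPair Om u v) : BddBelowOnBounded Om u :=
  bddBelowOnBounded_of_Ilow_eq fun _ => h.Ilow_lower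

lemma bddAboveOnBounded_upper (h : HContPair Om u v) : BddAboveOnBounded Om v :=
  bddAboveOnBounded_of_Shigh_eq fun _ => h.Shigh_upper

lemma lowerSemicontinuousOn_lower (h : HContPair Om u v) : LowerSemicontinuousOn u Om :=
  fun _ hx _ ha => eventually_lt_of_lt_Ilow h.bddBelowOnBounded_lower (h.Ilow_lower hx ▸ ha)

lemma upperSemicontinuousOn_upper (h : HContPair Om u v) : UpperSemicontinuousOn v Om :=
  fun _ hx _ ha => eventually_lt_of_Shigh_lt h.bddAboveOnBounded_upper (h.Shigh_upper hx ▸ ha)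

/- Since `v x` is the upper limit of `u` at `x`, some `y` near `x` has `u y > v x - ε / 2`, while
`v < v x + ε / 2` near `x`; by semicontinuity both bounds persist near `y`. -/
lemma frequently_eventually_upper_sub_lower_lt (h : HContPair Om u v) (hx : x ∈ Om)
    (hε : 0 < ε) : ∃ᶠ y in 𝓝[Om] x, ∀ᶠ z in 𝓝[Om] y, v z - u z < ε := by
  have hv : ∀ᶠ y in 𝓝[Om] x, ∀ᶠ z in 𝓝[Om] y, v z < v x + ε / 2 :=
    eventually_eventually_nhdsWithin.2
      (h.upperSemicontinuousOn_upper x hx _ (lt_add_of_pos_right _ (half_pos hε)))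
  have hu : ∃ᶠ y in 𝓝[Om] x, v x - ε / 2 < u y := by
    intro hle
    have := Shigh_le hx (hle.mono fun _ => le_of_not_gt)
    rw [h.Shigh_lower hx] at this
    linarith
  refine (hu.and_eventually (hv.and self_mem_nhdsWithin)).mono fun y ⟨huy, hvy, hy⟩ => ?_
  filter_upwards [hvy, h.lowerSemicontinuousOn_lower y hy _ huy] with z hvz huz
  linarith

lemma eq_Ilow_and_eq_Shigh (h : HContPair Om p q) (hmp : ∀ y ∈ Om, m y ≤ p y)
    (hqM : ∀ y ∈ Om, q y ≤ M y) (hMm : ∀ y ∈ Om, Ilow Om Om M y ≤ Shigh Om Om m y)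
    (hx : x ∈ Om) : p x = Ilow Om Om M x ∧ q x = Shigh Om Om m x := by
  have hp := h.bddBelowOnBounded_lower
  have hq := h.bddAboveOnBounded_upper
  have hM : BddBelowOnBounded Om M := hp.mono fun y hy => (h.1.2.2 y hy).trans (hqM y hy)
  have hm : BddAboveOnBounded Om m := hq.mono fun y hy => (hmp y hy).trans (h.1.2.2 y hy)
  have hpM (y) (hy : y ∈ Om) : p y ≤ Ilow Om Om M y :=
    le_Ilow_of_lowerSemicontinuousOn h.lowerSemicontinuousOn_lower
      (fun z hz => (h.1.2.2 z hz).trans (hqM z hz)) hy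
  have hmq (y) (hy : y ∈ Om) : Shigh Om Om m y ≤ q y :=
    Shigh_le_of_upperSemicontinuousOn h.upperSemicontinuousOn_upper
      (fun z hz => (hmp z hz).trans (h.1.2.2 z hz)) hy
  refine ⟨(hpM x hx).antisymm ?_, le_antisymm ?_ (hmq x hx)⟩
  · rw [← h.Ilow_upper hx]
    exact le_Ilow_of_lowerSemicontinuousOn (lowerSemicontinuousOn_Ilow hM)
      (fun y hy => (hMm y hy).trans (hmq y hy)) hx
  · rw [← h.Shigh_lower hx]
    exact Shigh_le_of_upperSemicontinuousOn (upperSemicontinuousOn_Shigh hm)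
      (fun y hy => (hpM y hy).trans (hMm y hy)) hx

end HContPair

lemma hContPair_Ilow_Shigh (hl : BddBelowOnBounded Om f) (hu : BddAboveOnBounded Om f)
    (hIS : ∀ x ∈ Om, Ilow Om Om (Shigh Om Om f) x ≤ Ilow Om Om f x)
    (hSI : ∀ x ∈ Om, Shigh Om Om f x ≤ Shigh Om Om (Ilow Om Om f) x) :
    HContPair Om (Ilow Om Om f) (Shigh Om Om f) := by
  have hle (x) (hx : x ∈ Om) : Ilow Om Om f x ≤ Shigh Om Om f x :=
    (Ilow_le hl hx).trans (le_Shigh hu hx)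
  refine ⟨⟨locBddOn_of_bddBelowOnBounded_of_bddAboveOnBounded hl.Ilow (hu.Shigh.mono hle),
    locBddOn_of_bddBelowOnBounded_of_bddAboveOnBounded (hl.Ilow.mono hle) hu.Shigh, hle⟩, ?_⟩
  intro p q _ _ hpq x hx
  have hp : BddBelowOnBounded Om p := hl.Ilow.mono fun y hy => (hpq y hy).1
  have hq : BddAboveOnBounded Om q := hu.Shigh.mono fun y hy => (hpq y hy).2.2
  constructor
  · apply le_antisymm
    · calc Ilow Om Om p x ≤ Ilow Om Om (Shigh Om Om f) x :=
            Ilow_mono hp (fun y hy => (hpq y hy).2.1.trans (hpq y hy).2.2) hx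
        _ ≤ Ilow Om Om f x := hIS x hx
    · exact le_Ilow_of_lowerSemicontinuousOn (lowerSemicontinuousOn_Ilow hl)
        (fun y hy => (hpq y hy).1) hx
  · apply le_antisymm
    · exact Shigh_le_of_upperSemicontinuousOn (upperSemicontinuousOn_Shigh hu)
        (fun y hy => (hpq y hy).2.2) hx
    · calc Shigh Om Om f x ≤ Shigh Om Om (Ilow Om Om f) x := hSI x hx
        _ ≤ Shigh Om Om q x := Shigh_mono hq (fun y hy => (hpq y hy).1.trans (hpq y hy).2.1) hx

lemma hContPair_Ilow_Ilow_Shigh (hl : BddBelowOnBounded Om f) (hu : BddAboveOnBounded Om f) :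
    HContPair Om (Ilow Om Om (Ilow Om Om (Shigh Om Om f)))
      (Shigh Om Om (Ilow Om Om (Shigh Om Om f))) := by
  have hlS : BddBelowOnBounded Om (Shigh Om Om f) := hl.mono fun _ => le_Shigh hu
  have huIS : BddAboveOnBounded Om (Ilow Om Om (Shigh Om Om f)) :=
    hu.Shigh.mono fun _ => Ilow_le hlS
  have hSIS (x) (hx : x ∈ Om) : Shigh Om Om (Ilow Om Om (Shigh Om Om f)) x ≤ Shigh Om Om f x :=
    Shigh_le_of_upperSemicontinuousOn (upperSemicontinuousOn_Shigh hu) (fun _ => Ilow_le hlS) hx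
  refine hContPair_Ilow_Shigh hlS.Ilow huIS (fun x hx => ?_) fun x hx => ?_
  · rw [Ilow_Ilow hlS hx]
    exact Ilow_mono (hlS.Ilow.mono fun _ => le_Shigh huIS) hSIS hx
  · exact Shigh_mono (huIS.mono fun _ => Ilow_le hlS.Ilow) (fun _ hy => (Ilow_Ilow hlS hy).ge) hx

lemma hContPair_Ilow_Shigh_Shigh (hl : BddBelowOnBounded Om f) (hu : BddAboveOnBounded Om f) :
    HContPair Om (Ilow Om Om (Shigh Om Om (Ilow Om Om f)))
      (Shigh Om Om (Shigh Om Om (Ilow Om Om f))) := by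
  have huI : BddAboveOnBounded Om (Ilow Om Om f) := hu.mono fun _ => Ilow_le hl
  have hlSI : BddBelowOnBounded Om (Shigh Om Om (Ilow Om Om f)) :=
    hl.Ilow.mono fun _ => le_Shigh huI
  have hISI (x) (hx : x ∈ Om) : Ilow Om Om f x ≤ Ilow Om Om (Shigh Om Om (Ilow Om Om f)) x :=
    le_Ilow_of_lowerSemicontinuousOn (lowerSemicontinuousOn_Ilow hl) (fun _ => le_Shigh huI) hx
  refine hContPair_Ilow_Shigh hlSI huI.Shigh (fun x hx => ?_) fun x hx => ?_
  · exact Ilow_mono (hlSI.mono fun _ => le_Shigh huI.Shigh)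
      (fun _ hy => (Shigh_Shigh huI hy).le) hx
  · rw [Shigh_Shigh huI hx]
    exact Shigh_mono (huI.Shigh.mono fun _ => Ilow_le hlSI) hISI hx

end HausdorffContinuity

section IntervalProduct

section Defs

variable {R : Type*} [Mul R] [LinearOrder R] {a b c d : R}

/-- The upper endpoint of the interval product `[a, b] * [c, d]`. -/
def mulUpper (a b c d : R) : R :=
  max (max (a * c) (a * d)) (max (b * c) (b * d))

/-- The lower endpoint of the interval product `[a, b] * [c, d]`. -/
def mulLower (a b c d : R) : R :=
  min (min (a * c) (a * d)) (min (b * c) (b * d))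

lemma mulLower_le_mulUpper (a b c d : R) : mulLower a b c d ≤ mulUpper a b c d :=
  ((min_le_left _ _).trans (min_le_left _ _)).trans
    ((le_max_left _ _).trans (le_max_left _ _))

lemma exists_mulUpper_eq (hab : a ≤ b) (hcd : c ≤ d) :
    ∃ x ∈ Icc a b, ∃ y ∈ Icc c d, mulUpper a b c d = x * y := by
  have hcorner : mulUpper a b c d = a * c ∨ mulUpper a b c d = a * d ∨
      mulUpper a b c d = b * c ∨ mulUpper a b c d = b * d := by
    grind [mulUpper]
  rcases hcorner with h | h | h | h
  · exact ⟨a, left_mem_Icc.2 hab, c, left_mem_Icc.2 hcd, h⟩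
  · exact ⟨a, left_mem_Icc.2 hab, d, right_mem_Icc.2 hcd, h⟩
  · exact ⟨b, right_mem_Icc.2 hab, c, left_mem_Icc.2 hcd, h⟩
  · exact ⟨b, right_mem_Icc.2 hab, d, right_mem_Icc.2 hcd, h⟩

end Defs

section OrderedRing

variable {R : Type*} [CommRing R] [LinearOrder R] [IsOrderedRing R]
  {a a' b b' c c' d d' x y C δ η : R}

lemma mulLower_eq_neg_mulUpper (a b c d : R) : mulLower a b c d = -mulUpper (-b) (-a) c d := by
  simp only [mulLower, mulUpper, neg_mul, max_neg_neg, neg_neg]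
  exact min_comm _ _

lemma mul_le_max_of_mem_Icc (hx : x ∈ Icc a b) (y : R) : x * y ≤ max (a * y) (b * y) := by
  rcases le_total 0 y with hy | hy
  · exact le_max_of_le_right (mul_le_mul_of_nonneg_right hx.2 hy)
  · exact le_max_of_le_left (mul_le_mul_of_nonpos_right hx.1 hy)

lemma mul_le_mulUpper (hx : x ∈ Icc a b) (hy : y ∈ Icc c d) : x * y ≤ mulUpper a b c d := by
  have hmul (z : R) : z * y ≤ max (z * c) (z * d) := by
    simpa only [mul_comm z] using mul_le_max_of_mem_Icc hy z
  exact (mul_le_max_of_mem_Icc hx y).trans (max_le_max (hmul a) (hmul b))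

lemma mulUpper_le_mulUpper (ha : a' ≤ a) (hab : a ≤ b) (hb : b ≤ b') (hc : c' ≤ c)
    (hcd : c ≤ d) (hd : d ≤ d') : mulUpper a b c d ≤ mulUpper a' b' c' d' := by
  have ha_mem : a ∈ Icc a' b' := ⟨ha, hab.trans hb⟩
  have hb_mem : b ∈ Icc a' b' := ⟨ha.trans hab, hb⟩
  have hc_mem : c ∈ Icc c' d' := ⟨hc, hcd.trans hd⟩
  have hd_mem : d ∈ Icc c' d' := ⟨hc.trans hcd, hd⟩
  exact max_le
    (max_le (mul_le_mulUpper ha_mem hc_mem) (mul_le_mulUpper ha_mem hd_mem))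
    (max_le (mul_le_mulUpper hb_mem hc_mem) (mul_le_mulUpper hb_mem hd_mem))

lemma exists_mulLower_eq (hab : a ≤ b) (hcd : c ≤ d) :
    ∃ x ∈ Icc a b, ∃ y ∈ Icc c d, mulLower a b c d = x * y := by
  obtain ⟨x, hx, y, hy, hxy⟩ := exists_mulUpper_eq (neg_le_neg hab) hcd
  refine ⟨-x, ⟨le_neg_of_le_neg hx.2, neg_le_of_neg_le hx.1⟩, y, hy, ?_⟩
  rw [mulLower_eq_neg_mulUpper, hxy, neg_mul]

lemma mul_sub_mul_le (hx : |x| ≤ C) (hb : |b| ≤ C) (hxa : |x - a| ≤ δ) (hyb : |y - b| ≤ η) :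
    x * y - a * b ≤ C * (δ + η) := by
  have hC : 0 ≤ C := (abs_nonneg x).trans hx
  have hδ : 0 ≤ δ := (abs_nonneg _).trans hxa
  calc x * y - a * b = x * (y - b) + (x - a) * b := by ring
    _ ≤ |x| * |y - b| + |x - a| * |b| := by
      simpa only [abs_mul] using add_le_add (le_abs_self (x * (y - b))) (le_abs_self ((x - a) * b))
    _ ≤ C * η + δ * C := by gcongr
    _ = C * (δ + η) := by ring

lemma mulUpper_sub_mulLower_le (hab : a ≤ b) (hcd : c ≤ d) (ha : |a| ≤ C) (hb : |b| ≤ C)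
    (hc : |c| ≤ C) (hd : |d| ≤ C) :
    mulUpper a b c d - mulLower a b c d ≤ C * ((b - a) + (d - c)) := by
  obtain ⟨x, hx, y, hy, hxy⟩ := exists_mulUpper_eq hab hcd
  obtain ⟨x', hx', y', hy', hxy'⟩ := exists_mulLower_eq hab hcd
  rw [hxy, hxy']
  exact mul_sub_mul_le ((abs_le_max_abs_abs hx.1 hx.2).trans (max_le ha hb))
    ((abs_le_max_abs_abs hy'.1 hy'.2).trans (max_le hc hd))
    (abs_sub_le_of_le_of_le hx.1 hx.2 hx'.1 hx'.2) (abs_sub_le_of_le_of_le hy.1 hy.2 hy'.1 hy'.2)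

end OrderedRing

section Functions

open Filter Topology

variable {X : Type*} {s : Set X} {u₁ v₁ u₂ v₂ : X → ℝ}

lemma mulLower_fun_eq_neg_mulUpper (u₁ v₁ u₂ v₂ : X → ℝ) :
    (fun x => mulLower (u₁ x) (v₁ x) (u₂ x) (v₂ x)) =
      -fun x => mulUpper ((-v₁) x) ((-u₁) x) (u₂ x) (v₂ x) :=
  funext fun _ => mulLower_eq_neg_mulUpper _ _ _ _

lemma bddAboveOnBounded_mulUpper [Bornology X] (hu₁ : BddBelowOnBounded s u₁)
    (hv₁ : BddAboveOnBounded s v₁) (hu₂ : BddBelowOnBounded s u₂) (hv₂ : BddAboveOnBounded s v₂)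
    (h₁ : ∀ x ∈ s, u₁ x ≤ v₁ x) (h₂ : ∀ x ∈ s, u₂ x ≤ v₂ x) :
    BddAboveOnBounded s fun x => mulUpper (u₁ x) (v₁ x) (u₂ x) (v₂ x) := by
  intro t hts ht
  obtain ⟨a, ha⟩ := hu₁ t hts ht
  obtain ⟨b, hb⟩ := hv₁ t hts ht
  obtain ⟨c, hc⟩ := hu₂ t hts ht
  obtain ⟨d, hd⟩ := hv₂ t hts ht
  exact ⟨mulUpper a b c d, forall_mem_image.2 fun x hx => mulUpper_le_mulUpper
    (ha (mem_image_of_mem u₁ hx)) (h₁ x (hts hx)) (hb (mem_image_of_mem v₁ hx))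
    (hc (mem_image_of_mem u₂ hx)) (h₂ x (hts hx)) (hd (mem_image_of_mem v₂ hx))⟩

lemma bddBelowOnBounded_mulLower [Bornology X] (hu₁ : BddBelowOnBounded s u₁)
    (hv₁ : BddAboveOnBounded s v₁) (hu₂ : BddBelowOnBounded s u₂) (hv₂ : BddAboveOnBounded s v₂)
    (h₁ : ∀ x ∈ s, u₁ x ≤ v₁ x) (h₂ : ∀ x ∈ s, u₂ x ≤ v₂ x) :
    BddBelowOnBounded s fun x => mulLower (u₁ x) (v₁ x) (u₂ x) (v₂ x) := by
  rw [mulLower_fun_eq_neg_mulUpper, bddBelowOnBounded_neg]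
  exact bddAboveOnBounded_mulUpper (bddBelowOnBounded_neg.2 hv₁) (bddAboveOnBounded_neg.2 hu₁)
    hu₂ hv₂ (fun x hx => neg_le_neg (h₁ x hx)) h₂

/- Near `x` the factors lie in the `η`-enlargements of the intervals at `x`, and the upper endpoint
of the product of the enlarged intervals is continuous in `η`. -/
lemma upperSemicontinuousOn_mulUpper [TopologicalSpace X] (hu₁ : LowerSemicontinuousOn u₁ s)
    (hv₁ : UpperSemicontinuousOn v₁ s) (hu₂ : LowerSemicontinuousOn u₂ s)
    (hv₂ : UpperSemicontinuousOn v₂ s) (h₁ : ∀ x ∈ s, u₁ x ≤ v₁ x) (h₂ : ∀ x ∈ s, u₂ x ≤ v₂ x) :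
    UpperSemicontinuousOn (fun x => mulUpper (u₁ x) (v₁ x) (u₂ x) (v₂ x)) s := by
  intro x hx K hK
  let enlarged (η : ℝ) : ℝ := mulUpper (u₁ x - η) (v₁ x + η) (u₂ x - η) (v₂ x + η)
  have hcont : Continuous enlarged := by
    unfold enlarged mulUpper
    fun_prop
  have hzero : enlarged 0 < K := by
    simpa only [enlarged, sub_zero, add_zero] using hK
  obtain ⟨η, hηK, hη⟩ : ∃ η, enlarged η < K ∧ 0 < η :=
    (((hcont.tendsto 0).eventually_lt_const hzero).filter_mono nhdsWithin_le_nhds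
      |>.and (self_mem_nhdsWithin (s := Ioi 0))).exists
  filter_upwards [hu₁ x hx _ (sub_lt_self _ hη), hv₁ x hx _ (lt_add_of_pos_right _ hη),
    hu₂ x hx _ (sub_lt_self _ hη), hv₂ x hx _ (lt_add_of_pos_right _ hη),
    self_mem_nhdsWithin] with y hu₁y hv₁y hu₂y hv₂y hy
  exact (mulUpper_le_mulUpper hu₁y.le (h₁ y hy) hv₁y.le hu₂y.le (h₂ y hy) hv₂y.le).trans_lt hηK

lemma lowerSemicontinuousOn_mulLower [TopologicalSpace X] (hu₁ : LowerSemicontinuousOn u₁ s)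
    (hv₁ : UpperSemicontinuousOn v₁ s) (hu₂ : LowerSemicontinuousOn u₂ s)
    (hv₂ : UpperSemicontinuousOn v₂ s) (h₁ : ∀ x ∈ s, u₁ x ≤ v₁ x) (h₂ : ∀ x ∈ s, u₂ x ≤ v₂ x) :
    LowerSemicontinuousOn (fun x => mulLower (u₁ x) (v₁ x) (u₂ x) (v₂ x)) s := by
  rw [mulLower_fun_eq_neg_mulUpper, lowerSemicontinuousOn_neg_iff]
  exact upperSemicontinuousOn_mulUpper (lowerSemicontinuousOn_neg_iff.2 hv₁)
    (upperSemicontinuousOn_neg_iff.2 hu₁) hu₂ hv₂ (fun x hx => neg_le_neg (h₁ x hx)) h₂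

end Functions

end IntervalProduct

section ProductOfHContPairs

open Filter Topology

variable {n : ℕ} {Om : Set (Pt n)} {u₁ v₁ u₂ v₂ pl pu ql qu : Pt n → ℝ} {x : Pt n} {ε : ℝ}

lemma imin_le_imax (u₁ v₁ u₂ v₂ : Pt n → ℝ) (x : Pt n) :
    imin u₁ v₁ u₂ v₂ x ≤ imax u₁ v₁ u₂ v₂ x :=
  mulLower_le_mulUpper _ _ _ _

lemma bddBelowOnBounded_imin (h₁ : HContPair Om u₁ v₁) (h₂ : HContPair Om u₂ v₂) :
    BddBelowOnBounded Om (imin u₁ v₁ u₂ v₂) :=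
  bddBelowOnBounded_mulLower h₁.bddBelowOnBounded_lower h₁.bddAboveOnBounded_upper
    h₂.bddBelowOnBounded_lower h₂.bddAboveOnBounded_upper h₁.1.2.2 h₂.1.2.2

lemma bddAboveOnBounded_imax (h₁ : HContPair Om u₁ v₁) (h₂ : HContPair Om u₂ v₂) :
    BddAboveOnBounded Om (imax u₁ v₁ u₂ v₂) :=
  bddAboveOnBounded_mulUpper h₁.bddBelowOnBounded_lower h₁.bddAboveOnBounded_upper
    h₂.bddBelowOnBounded_lower h₂.bddAboveOnBounded_upper h₁.1.2.2 h₂.1.2.2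

lemma lowerSemicontinuousOn_imin (h₁ : HContPair Om u₁ v₁) (h₂ : HContPair Om u₂ v₂) :
    LowerSemicontinuousOn (imin u₁ v₁ u₂ v₂) Om :=
  lowerSemicontinuousOn_mulLower h₁.lowerSemicontinuousOn_lower h₁.upperSemicontinuousOn_upper
    h₂.lowerSemicontinuousOn_lower h₂.upperSemicontinuousOn_upper h₁.1.2.2 h₂.1.2.2

lemma upperSemicontinuousOn_imax (h₁ : HContPair Om u₁ v₁) (h₂ : HContPair Om u₂ v₂) :
    UpperSemicontinuousOn (imax u₁ v₁ u₂ v₂) Om :=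
  upperSemicontinuousOn_mulUpper h₁.lowerSemicontinuousOn_lower h₁.upperSemicontinuousOn_upper
    h₂.lowerSemicontinuousOn_lower h₂.upperSemicontinuousOn_upper h₁.1.2.2 h₂.1.2.2

lemma frequently_upper_sub_lower_lt_and (h₁ : HContPair Om u₁ v₁) (h₂ : HContPair Om u₂ v₂)
    (hx : x ∈ Om) (hε : 0 < ε) :
    ∃ᶠ z in 𝓝[Om] x, v₁ z - u₁ z < ε ∧ v₂ z - u₂ z < ε := by
  intro hnot
  obtain ⟨y, hy₁, hynot, hy⟩ := ((h₁.frequently_eventually_upper_sub_lower_lt hx hε).and_eventually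
    ((eventually_eventually_nhdsWithin.2 hnot).and self_mem_nhdsWithin)).exists
  obtain ⟨z, hz₂, hz₁, hznot, hz⟩ :=
    ((h₂.frequently_eventually_upper_sub_lower_lt hy hε).and_eventually
      (hy₁.and (hynot.and self_mem_nhdsWithin))).exists
  exact hznot ⟨hz₁, hz₂.self_of_nhdsWithin hz⟩

lemma frequently_imax_sub_imin_lt (h₁ : HContPair Om u₁ v₁) (h₂ : HContPair Om u₂ v₂)
    (hx : x ∈ Om) (hε : 0 < ε) :
    ∃ᶠ z in 𝓝[Om] x, imax u₁ v₁ u₂ v₂ z - imin u₁ v₁ u₂ v₂ z < ε := by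
  obtain ⟨C, ⟨⟨hu₁, hv₁⟩, hu₂, hv₂⟩, hC⟩ :=
    (((h₁.1.1.eventually_abs_le hx).and (h₁.1.2.1.eventually_abs_le hx)).and
      ((h₂.1.1.eventually_abs_le hx).and (h₂.1.2.1.eventually_abs_le hx))
      |>.and (eventually_gt_atTop 0)).exists
  have hη : 0 < ε / (2 * C) := by positivity
  refine ((frequently_upper_sub_lower_lt_and h₁ h₂ hx hη).and_eventually
    ((hu₁.and hv₁).and ((hu₂.and hv₂).and self_mem_nhdsWithin))).mono ?_
  rintro z ⟨⟨hw₁, hw₂⟩, ⟨hu₁z, hv₁z⟩, ⟨hu₂z, hv₂z⟩, hz⟩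
  calc imax u₁ v₁ u₂ v₂ z - imin u₁ v₁ u₂ v₂ z
      ≤ C * ((v₁ z - u₁ z) + (v₂ z - u₂ z)) :=
        mulUpper_sub_mulLower_le (h₁.1.2.2 z hz) (h₂.1.2.2 z hz) hu₁z hv₁z hu₂z hv₂z
    _ < C * (ε / (2 * C) + ε / (2 * C)) := by gcongr
    _ = ε := by field

lemma Ilow_imax_le_Shigh_imin (h₁ : HContPair Om u₁ v₁) (h₂ : HContPair Om u₂ v₂)
    (hx : x ∈ Om) :
    Ilow Om Om (imax u₁ v₁ u₂ v₂) x ≤ Shigh Om Om (imin u₁ v₁ u₂ v₂) x := by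
  have hl : BddBelowOnBounded Om (imax u₁ v₁ u₂ v₂) :=
    (bddBelowOnBounded_imin h₁ h₂).mono fun _ _ => imin_le_imax _ _ _ _ _
  have hu : BddAboveOnBounded Om (imin u₁ v₁ u₂ v₂) :=
    (bddAboveOnBounded_imax h₁ h₂).mono fun _ _ => imin_le_imax _ _ _ _ _
  by_contra! hlt
  obtain ⟨s, hs, hsI⟩ := exists_between hlt
  obtain ⟨t, hst, ht⟩ := exists_between hsI
  obtain ⟨z, hz, hMz, hmz⟩ :=
    ((frequently_imax_sub_imin_lt h₁ h₂ hx (sub_pos.2 hst)).and_eventually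
      ((eventually_lt_of_lt_Ilow hl ht).and (eventually_lt_of_Shigh_lt hu hs))).exists
  linarith

lemma IsOtimes.unique (hp : IsOtimes Om u₁ v₁ u₂ v₂ pl pu) (hq : IsOtimes Om u₁ v₁ u₂ v₂ ql qu)
    (h₁ : HContPair Om u₁ v₁) (h₂ : HContPair Om u₂ v₂) (hx : x ∈ Om) :
    ql x = pl x ∧ qu x = pu x := by
  have heq {rl ru : Pt n → ℝ} (hr : IsOtimes Om u₁ v₁ u₂ v₂ rl ru) :
      rl x = Ilow Om Om (imax u₁ v₁ u₂ v₂) x ∧ ru x = Shigh Om Om (imin u₁ v₁ u₂ v₂) x :=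
    hr.1.eq_Ilow_and_eq_Shigh (fun y hy => (hr.2 y hy).1) (fun y hy => (hr.2 y hy).2.2)
      (fun _ => Ilow_imax_le_Shigh_imin h₁ h₂) hx
  exact ⟨(heq hq).1.trans (heq hp).1.symm, (heq hq).2.trans (heq hp).2.symm⟩

lemma isOtimes_Ilow_Ilow_Shigh_imax (h₁ : HContPair Om u₁ v₁) (h₂ : HContPair Om u₂ v₂) :
    IsOtimes Om u₁ v₁ u₂ v₂ (Ilow Om Om (Ilow Om Om (Shigh Om Om (imax u₁ v₁ u₂ v₂))))
      (Shigh Om Om (Ilow Om Om (Shigh Om Om (imax u₁ v₁ u₂ v₂)))) := by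
  have hm := lowerSemicontinuousOn_imin h₁ h₂
  have hM := upperSemicontinuousOn_imax h₁ h₂
  have hu := bddAboveOnBounded_imax h₁ h₂
  have hl : BddBelowOnBounded Om (imax u₁ v₁ u₂ v₂) :=
    (bddBelowOnBounded_imin h₁ h₂).mono fun _ _ => imin_le_imax _ _ _ _ _
  have hlS : BddBelowOnBounded Om (Shigh Om Om (imax u₁ v₁ u₂ v₂)) :=
    hl.mono fun _ => le_Shigh hu
  have hF := hContPair_Ilow_Ilow_Shigh hl hu
  refine ⟨hF, fun x hx => ⟨?_, hF.1.2.2 x hx, ?_⟩⟩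
  · refine le_Ilow_of_lowerSemicontinuousOn hm (fun y hy => ?_) hx
    exact le_Ilow_of_lowerSemicontinuousOn hm
      (fun z hz => (imin_le_imax _ _ _ _ z).trans (le_Shigh hu hz)) hy
  · exact Shigh_le_of_upperSemicontinuousOn hM (fun y hy => (Ilow_le hlS hy).trans
      (Shigh_le_of_upperSemicontinuousOn hM (fun _ _ => le_rfl) hy)) hx

lemma isOtimes_Ilow_Shigh_Shigh_imin (h₁ : HContPair Om u₁ v₁) (h₂ : HContPair Om u₂ v₂) :
    IsOtimes Om u₁ v₁ u₂ v₂ (Ilow Om Om (Shigh Om Om (Ilow Om Om (imin u₁ v₁ u₂ v₂))))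
      (Shigh Om Om (Shigh Om Om (Ilow Om Om (imin u₁ v₁ u₂ v₂)))) := by
  have hm := lowerSemicontinuousOn_imin h₁ h₂
  have hM := upperSemicontinuousOn_imax h₁ h₂
  have hl := bddBelowOnBounded_imin h₁ h₂
  have hu : BddAboveOnBounded Om (imin u₁ v₁ u₂ v₂) :=
    (bddAboveOnBounded_imax h₁ h₂).mono fun _ _ => imin_le_imax _ _ _ _ _
  have huI : BddAboveOnBounded Om (Ilow Om Om (imin u₁ v₁ u₂ v₂)) :=
    hu.mono fun _ => Ilow_le hl
  have hF := hContPair_Ilow_Shigh_Shigh hl hu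
  refine ⟨hF, fun x hx => ⟨?_, hF.1.2.2 x hx, ?_⟩⟩
  · exact le_Ilow_of_lowerSemicontinuousOn hm (fun y hy =>
      (le_Ilow_of_lowerSemicontinuousOn hm (fun _ _ => le_rfl) hy).trans (le_Shigh huI hy)) hx
  · refine Shigh_le_of_upperSemicontinuousOn hM (fun y hy => ?_) hx
    exact Shigh_le_of_upperSemicontinuousOn hM
      (fun z hz => (Ilow_le hl hz).trans (imin_le_imax _ _ _ _ z)) hy

theorem stmt10_general (h₁ : HContPair Om u₁ v₁) (h₂ : HContPair Om u₂ v₂) :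
    IsOtimes Om u₁ v₁ u₂ v₂ (Ilow Om Om (Ilow Om Om (Shigh Om Om (imax u₁ v₁ u₂ v₂))))
      (Shigh Om Om (Ilow Om Om (Shigh Om Om (imax u₁ v₁ u₂ v₂)))) ∧
    IsOtimes Om u₁ v₁ u₂ v₂ (Ilow Om Om (Shigh Om Om (Ilow Om Om (imin u₁ v₁ u₂ v₂))))
      (Shigh Om Om (Shigh Om Om (Ilow Om Om (imin u₁ v₁ u₂ v₂)))) ∧
    ∀ ql qu : Pt n → ℝ, IsOtimes Om u₁ v₁ u₂ v₂ ql qu → ∀ x ∈ Om,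
      ql x = Ilow Om Om (Ilow Om Om (Shigh Om Om (imax u₁ v₁ u₂ v₂))) x ∧
      qu x = Shigh Om Om (Ilow Om Om (Shigh Om Om (imax u₁ v₁ u₂ v₂))) x ∧
      ql x = Ilow Om Om (Shigh Om Om (Ilow Om Om (imin u₁ v₁ u₂ v₂))) x ∧
      qu x = Shigh Om Om (Shigh Om Om (Ilow Om Om (imin u₁ v₁ u₂ v₂))) x := by
  have hFM := isOtimes_Ilow_Ilow_Shigh_imax h₁ h₂
  have hFm := isOtimes_Ilow_Shigh_Shigh_imin h₁ h₂
  refine ⟨hFM, hFm, fun ql qu hq x hx => ?_⟩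
  obtain ⟨hlM, huM⟩ := hFM.unique hq h₁ h₂ hx
  obtain ⟨hlm, hum⟩ := hFm.unique hq h₁ h₂ hx
  exact ⟨hlM, huM, hlm, hum⟩

end ProductOfHContPairs

theorem stmt10 {n : ℕ} (Om : Set (Pt n)) (hOm : IsOpen Om)
    (u₁ v₁ u₂ v₂ : Pt n → ℝ)
    (h₁ : HContPair Om u₁ v₁) (h₂ : HContPair Om u₂ v₂)
    (m M : Pt n → ℝ)
    (hm : m = imin u₁ v₁ u₂ v₂) (hM : M = imax u₁ v₁ u₂ v₂) :
    HContPair Om (Ilow Om Om (Ilow Om Om (Shigh Om Om M)))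
      (Shigh Om Om (Ilow Om Om (Shigh Om Om M))) ∧
    (∀ x ∈ Om, m x ≤ Ilow Om Om (Ilow Om Om (Shigh Om Om M)) x ∧
      Ilow Om Om (Ilow Om Om (Shigh Om Om M)) x ≤
        Shigh Om Om (Ilow Om Om (Shigh Om Om M)) x ∧
      Shigh Om Om (Ilow Om Om (Shigh Om Om M)) x ≤ M x) ∧
    HContPair Om (Ilow Om Om (Shigh Om Om (Ilow Om Om m)))
      (Shigh Om Om (Shigh Om Om (Ilow Om Om m))) ∧
    (∀ x ∈ Om, m x ≤ Ilow Om Om (Shigh Om Om (Ilow Om Om m)) x ∧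
      Ilow Om Om (Shigh Om Om (Ilow Om Om m)) x ≤
        Shigh Om Om (Shigh Om Om (Ilow Om Om m)) x ∧
      Shigh Om Om (Shigh Om Om (Ilow Om Om m)) x ≤ M x) ∧
    (∀ ql qu : Pt n → ℝ, IsOtimes Om u₁ v₁ u₂ v₂ ql qu →
      ∀ x ∈ Om,
        ql x = Ilow Om Om (Ilow Om Om (Shigh Om Om M)) x ∧
        qu x = Shigh Om Om (Ilow Om Om (Shigh Om Om M)) x ∧
        ql x = Ilow Om Om (Shigh Om Om (Ilow Om Om m)) x ∧
        qu x = Shigh Om Om (Shigh Om Om (Ilow Om Om m)) x) := by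
  subst hm hM
  obtain ⟨⟨hcM, hinM⟩, ⟨hcm, hinm⟩, hunique⟩ := stmt10_general h₁ h₂
  exact ⟨hcM, hinM, hcm, hinm, hunique⟩
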